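/- arXiv:1407.4102 — 3 statements merged into one kernel-verified Lean document; each statement's English description precedes it below -/
import Mathlib

section
/- The series γ₁ := ∑_{k=1}^∞ c(k)/k converges and equals log 4. -/
/-!
By Wallis' formula `c k = (1 / π) ∫₀^π sin (x) ^ (2k) dx`. Exchanging sum and integral and using
`∑_{k ≥ 1} y ^ k / k = -log (1 - y)` at `y = sin² x` gives
`∑_{k ≥ 1} c k / k = -(1 / π) ∫₀^π log (cos² x) dx`, which Euler's integral
`∫₀^π log (sin x) dx = -π log 2` evaluates to `2 log 2`.

The exchange requires the series of integrals, whose terms are nonnegative, to converge. This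
follows from `c k / (k + 1) = 2 (c k - c (k + 1))` and `c (k + 1) ≤ c k`, by which the partial
sums are bounded by a telescoping sum.
-/

/-- `c k = |binom(-1/2, k)| = binom(2k, k) / 4^k`. -/
noncomputable def c (k : ℕ) : ℝ := (Nat.choose (2 * k) k : ℝ) / 4 ^ k

lemma c_succ (k : ℕ) : c (k + 1) = c k * ((2 * k + 1) / (2 * k + 2)) := by
  have h := Nat.succ_mul_centralBinom_succ k
  rw [Nat.centralBinom_eq_two_mul_choose, Nat.centralBinom_eq_two_mul_choose] at h
  have h' : ((k : ℝ) + 1) * ((2 * (k + 1)).choose (k + 1) : ℝ)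
      = 2 * (2 * k + 1) * ((2 * k).choose k : ℝ) := by exact_mod_cast h
  unfold c
  rw [pow_succ]
  field_simp
  linear_combination 2 * h'

lemma c_nonneg (k : ℕ) : 0 ≤ c k := by
  unfold c; positivity

/-- Wallis' formula. -/
lemma integral_sin_pow_eq_c (k : ℕ) :
    ∫ x in (0 : ℝ)..Real.pi, Real.sin x ^ (2 * k) = Real.pi * c k := by
  rw [integral_sin_pow_even]
  congr 1
  induction k with
  | zero => simp [c]
  | succ k ih => rw [Finset.prod_range_succ, ih, c_succ]

lemma summable_c_div : Summable fun k : ℕ => c (k + 1) / (k + 1 : ℝ) := by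
  have tele (n : ℕ) :
      ∑ k ∈ Finset.range n, c (k + 1) / (k + 1 : ℝ) ≤ 2 * (c 0 - c n) := by
    induction n with
    | zero => simp
    | succ n ih =>
      rw [Finset.sum_range_succ]
      have h1 : c n / (n + 1 : ℝ) = 2 * (c n - c (n + 1)) := by
        rw [c_succ]; field_simp; ring
      have h2 : c (n + 1) ≤ c n := by
        have : 0 ≤ c n / (n + 1 : ℝ) := div_nonneg (c_nonneg n) (by positivity)
        linarith
      have h3 : c (n + 1) / (n + 1 : ℝ) ≤ c n / (n + 1 : ℝ) := by gcongr
      linarith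
  refine summable_of_sum_range_le (c := 2 * c 0)
    (fun k => div_nonneg (c_nonneg _) (by positivity)) fun n => ?_
  linarith [tele n, c_nonneg n]

lemma integral_log_cos_zero_pi :
    ∫ x in (0 : ℝ)..Real.pi, Real.log (Real.cos x) = -Real.log 2 * Real.pi := by
  -- `Real.log` is even, so `log ∘ sin` is `π`-periodic.
  have hp : Function.Periodic (fun x => Real.log (Real.sin x)) Real.pi := fun x => by
    simp [Real.sin_add_pi]
  have h := hp.intervalIntegral_add_eq (-(Real.pi / 2)) 0
  rw [zero_add, integral_log_sin_zero_pi] at h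
  simp_rw [← Real.sin_pi_div_two_sub]
  rw [intervalIntegral.integral_comp_sub_left (fun x => Real.log (Real.sin x)), ← h]
  congr 1 <;> ring

/-- The series `γ₁ = ∑_{k=1}^∞ c(k)/k` converges and equals `log 4`. -/
theorem gamma_one : HasSum (fun k : ℕ => c (k + 1) / (k + 1 : ℝ)) (Real.log 4) := by
  have hpi := Real.pi_pos
  let F : ℕ → ℝ → ℝ := fun k x => Real.sin x ^ (2 * (k + 1)) / (k + 1 : ℝ)
  let μ := MeasureTheory.volume.restrict (Set.Ioc 0 Real.pi)
  have hF_val (k : ℕ) : ∫ x, F k x ∂μ = Real.pi * (c (k + 1) / (k + 1 : ℝ)) := by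
    rw [← intervalIntegral.integral_of_le hpi.le, intervalIntegral.integral_div,
      integral_sin_pow_eq_c, mul_div_assoc]
  have hF_int (k : ℕ) : MeasureTheory.Integrable (F k) μ := by
    have : Continuous (F k) := by fun_prop
    exact (intervalIntegrable_iff_integrableOn_Ioc_of_le hpi.le).1 (this.intervalIntegrable _ _)
  have hF_norm (k : ℕ) (x : ℝ) : ‖F k x‖ = F k x :=
    Real.norm_of_nonneg (div_nonneg (by rw [pow_mul]; positivity) (by positivity))
  have key := MeasureTheory.hasSum_integral_of_summable_integral_norm hF_int (by
    simp_rw [hF_norm, hF_val]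
    exact summable_c_div.mul_left _)
  simp_rw [hF_val] at key
  have hsum : ∫ x, ∑' k, F k x ∂μ = Real.pi * Real.log 4 := by
    calc ∫ x, ∑' k, F k x ∂μ = ∫ x, -2 * Real.log (Real.cos x) ∂μ := by
          apply MeasureTheory.integral_congr_ae
          -- The logarithmic series diverges only at `x = π / 2`, where `sin x ^ 2 = 1`.
          have hne : ∀ᵐ x : ℝ, x ≠ Real.pi / 2 := by
            simp [MeasureTheory.ae_iff]
          filter_upwards [MeasureTheory.ae_restrict_of_ae hne,
            MeasureTheory.ae_restrict_mem measurableSet_Ioc] with x hx hmem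
          have hcos : Real.cos x ≠ 0 := fun h0 => hx <|
            Real.injOn_cos ⟨hmem.1.le, hmem.2⟩ ⟨by linarith, by linarith⟩
              (by rw [h0, Real.cos_pi_div_two])
          have hlt : |Real.sin x ^ 2| < 1 := by
            rw [abs_of_nonneg (sq_nonneg _)]
            have : 0 < Real.cos x ^ 2 := by positivity
            linarith [Real.sin_sq_add_cos_sq x]
          have hs := (Real.hasSum_pow_div_log_of_abs_lt_one hlt).tsum_eq
          simp only [F, pow_mul]
          rw [hs, ← Real.cos_sq', Real.log_pow]
          push_cast
          ring
      _ = Real.pi * Real.log 4 := by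
          rw [← intervalIntegral.integral_of_le hpi.le, intervalIntegral.integral_const_mul,
            integral_log_cos_zero_pi, show (4 : ℝ) = 2 ^ 2 by norm_num, Real.log_pow]
          push_cast
          ring
  rw [hsum] at key
  exact (hasSum_mul_left_iff hpi.ne').1 key
end

section
/- The series ∑_{k=0}^∞ c(k)/(k + 1/2)³ converges and equals π·(ζ(2) + (1/2)(log 4)²), i.e. the quantity γ̃₂ := (1/π)∑_{k=0}^∞ c(k)/(k + 1/2)³ equals ζ(2) + (1/2)(log 4)². -/
/-- `ζ(n) = ∑_{m=1}^∞ m^{-n}`. -/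
noncomputable def zetaVal (n : ℕ) : ℝ := ∑' m : ℕ, 1 / (m + 1 : ℝ) ^ n

namespace GammaTilde

open Filter Topology Finset

/-! ### The coefficients `c k` -/

lemma c_pos (k : ℕ) : 0 < c k := by
  unfold c
  have : 0 < Nat.choose (2 * k) k := Nat.choose_pos (by omega)
  positivity

lemma c_zero : c 0 = 1 := by simp [c]

lemma c_succ (k : ℕ) : ((k : ℝ) + 1) * c (k + 1) = (k + 1 / 2) * c k := by
  have h := Nat.succ_mul_centralBinom_succ k
  simp only [Nat.centralBinom] at h
  have h' : ((k : ℝ) + 1) * (Nat.choose (2 * (k + 1)) (k + 1) : ℝ)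
      = 2 * (2 * k + 1) * (Nat.choose (2 * k) k : ℝ) := by exact_mod_cast h
  unfold c
  rw [pow_succ]
  field_simp
  linear_combination 2 * h'

lemma c_succ' (k : ℕ) : c (k + 1) = (k + 1 / 2) / (k + 1) * c k := by
  have h := c_succ k
  field_simp at h ⊢
  linarith

/-- The partial products of Wallis' product are the numbers `1 / ((2N + 1) c(N)²)`. -/
lemma wallis_eq (N : ℕ) : Real.Wallis.W N * ((2 * N + 1) * c N ^ 2) = 1 := by
  induction N with
  | zero => simp [Real.Wallis.W, c_zero]
  | succ n ih =>
    rw [Real.Wallis.W_succ, c_succ']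
    push_cast
    have : (2 * (n : ℝ) + 1) ≠ 0 := by positivity
    have h2 : (2 * (n : ℝ) + 3) ≠ 0 := by positivity
    have h3 : ((n : ℝ) + 1) ≠ 0 := by positivity
    refine Eq.trans ?_ ih
    field_simp
    ring

lemma tendsto_c : Tendsto c atTop (𝓝 0) := by
  have hW := Real.Wallis.tendsto_W_nhds_pi_div_two
  have h1 : Tendsto (fun N : ℕ => (2 * (N : ℝ) + 1)) atTop atTop :=
    tendsto_atTop_add_const_right _ _
      (Tendsto.const_mul_atTop (by norm_num) tendsto_natCast_atTop_atTop)
  have h2 : Tendsto (fun N : ℕ => (Real.Wallis.W N)⁻¹ * (2 * (N : ℝ) + 1)⁻¹) atTop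
      (𝓝 ((Real.pi / 2)⁻¹ * 0)) :=
    (hW.inv₀ (by positivity)).mul h1.inv_tendsto_atTop
  rw [mul_zero] at h2
  have h3 := h2.sqrt
  rw [Real.sqrt_zero] at h3
  refine h3.congr fun N => ?_
  rw [← mul_inv, ← Real.sqrt_sq (c_pos N).le]
  congr 1
  rw [inv_eq_iff_eq_inv]
  have := wallis_eq N
  have hc := c_pos N
  field_simp
  linarith

/-- `∑ c(k) / (k + 1) = B(1, 1/2) = 2`, since `c(k) / (2(k + 1)) = c(k) - c(k + 1)`. -/
lemma hasSum_one : HasSum (fun k : ℕ => c k / ((k : ℝ) + 1)) 2 := by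
  rw [hasSum_iff_tendsto_nat_of_nonneg (fun k => div_nonneg (c_pos k).le (by positivity))]
  have h : ∀ N : ℕ, ∑ k ∈ range N, c k / ((k : ℝ) + 1) = 2 - 2 * c N := by
    intro N
    induction N with
    | zero => simp [c_zero]
    | succ n ih =>
      rw [sum_range_succ, ih, c_succ']
      field_simp
      ring
  simp_rw [h]
  simpa using tendsto_const_nhds.sub (tendsto_c.const_mul 2)

/-! ### The sums `T j s` and their recursions -/

/-- `T j s = ∑ₖ c(k) / (k + s)^j`; it converges for `s > 0` and `j ≥ 1`, and is used for
`s ≥ 1/2` only. -/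
noncomputable def T (j : ℕ) (s : ℝ) : ℝ := ∑' k : ℕ, c k / ((k : ℝ) + s) ^ j

lemma summable_T {j : ℕ} (hj : 1 ≤ j) {s : ℝ} (hs : 1 / 2 ≤ s) :
    Summable (fun k : ℕ => c k / ((k : ℝ) + s) ^ j) := by
  refine Summable.of_nonneg_of_le
    (fun k => div_nonneg (c_pos k).le (by positivity)) (fun k => ?_)
    (hasSum_one.summable.mul_left (2 ^ j))
  have hk : (0 : ℝ) ≤ k := k.cast_nonneg
  have h1 : (k : ℝ) + 1 ≤ ((k : ℝ) + 1) ^ j := le_self_pow₀ (by linarith) (by omega)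
  have h2 : ((k : ℝ) + 1) ^ j ≤ 2 ^ j * ((k : ℝ) + s) ^ j := by
    rw [← mul_pow]
    exact pow_le_pow_left₀ (by linarith) (by linarith) _
  have hpos : 0 < ((k : ℝ) + s) ^ j := by
    have : 0 < (k : ℝ) + s := by linarith
    positivity
  have hc := c_pos k
  rw [← mul_div_assoc, div_le_div_iff₀ hpos (by positivity)]
  nlinarith [mul_le_mul_of_nonneg_left (h1.trans h2) hc.le]

lemma hasSum_T {j : ℕ} (hj : 1 ≤ j) {s : ℝ} (hs : 1 / 2 ≤ s) :
    HasSum (fun k : ℕ => c k / ((k : ℝ) + s) ^ j) (T j s) := (summable_T hj hs).hasSum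

lemma T_nonneg (j : ℕ) {s : ℝ} (hs : 1 / 2 ≤ s) : 0 ≤ T j s :=
  tsum_nonneg fun k => div_nonneg (c_pos k).le (by positivity)

lemma T_one_pos {s : ℝ} (hs : 1 / 2 ≤ s) : 0 < T 1 s := by
  refine (summable_T le_rfl hs).tsum_pos (fun k => div_nonneg (c_pos k).le (by positivity)) 0 ?_
  have := c_pos 0
  positivity

lemma T_one_anti {s t : ℝ} (hs : 1 / 2 ≤ s) (hst : s ≤ t) : T 1 t ≤ T 1 s := by
  refine (summable_T le_rfl (hs.trans hst)).tsum_le_tsum (fun k => ?_) (summable_T le_rfl hs)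
  have hc := c_pos k
  have hk : (0 : ℝ) ≤ k := k.cast_nonneg
  have : 0 < (k : ℝ) + s := by linarith
  gcongr

lemma T_succ_le {j : ℕ} (hj : 1 ≤ j) {s : ℝ} (hs : 1 / 2 ≤ s) : T (j + 1) s ≤ T j s / s := by
  have h := (hasSum_T hj hs).div_const s
  refine hasSum_le (fun k => ?_) (hasSum_T (by omega) hs) h
  have hc := c_pos k
  have hk : (0 : ℝ) ≤ k := k.cast_nonneg
  have : 0 < s := by linarith
  rw [div_div, pow_succ]
  gcongr
  linarith

/-- A convergent series of differences `u (k + 1) - u k` with `u 0 = 0` and `u → 0` has sum `0`. -/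
lemma telescope {f u : ℕ → ℝ} {x : ℝ} (hf : HasSum f x) (h0 : u 0 = 0)
    (hu : Tendsto u atTop (𝓝 0)) (h : ∀ k, f k = u (k + 1) - u k) : x = 0 := by
  have h1 := hf.tendsto_sum_nat
  simp_rw [h, sum_range_sub, h0, sub_zero] at h1
  exact tendsto_nhds_unique h1 hu

lemma tendsto_u {j : ℕ} (hj : 1 ≤ j) {s : ℝ} (hs : 1 / 2 ≤ s) :
    Tendsto (fun k : ℕ => k * c k / ((k : ℝ) + s) ^ j) atTop (𝓝 0) := by
  have h := tendsto_c.mul_const (2 ^ j)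
  rw [zero_mul] at h
  refine squeeze_zero (fun k => ?_) (fun k => ?_) h
  · have := c_pos k
    positivity
  have hc := c_pos k
  have hk : (0 : ℝ) ≤ k := k.cast_nonneg
  have hp : 0 < ((k : ℝ) + s) ^ j := by
    have : 0 < (k : ℝ) + s := by linarith
    positivity
  have h1 : (k : ℝ) + 1 ≤ ((k : ℝ) + 1) ^ j := le_self_pow₀ (by linarith) (by omega)
  have h2 : ((k : ℝ) + 1) ^ j ≤ 2 ^ j * ((k : ℝ) + s) ^ j := by
    rw [← mul_pow]
    exact pow_le_pow_left₀ (by linarith) (by linarith) _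
  rw [div_le_iff₀ hp]
  nlinarith [mul_le_mul_of_nonneg_left (h1.trans h2) hc.le]

/-- The functional equation `s B(s, 1/2) = (s + 1/2) B(s + 1, 1/2)`. -/
lemma rec_one {s : ℝ} (hs : 1 / 2 ≤ s) : s * T 1 s = (s + 1 / 2) * T 1 (s + 1) := by
  have hs' : 1 / 2 ≤ s + 1 := by linarith
  have hf := ((hasSum_T le_rfl hs).mul_left s).sub
    ((hasSum_T le_rfl hs').mul_left (s + 1 / 2))
  refine sub_eq_zero.1 (telescope hf (by simp) (tendsto_u le_rfl hs) fun k => ?_)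
  have hk : (0 : ℝ) ≤ k := k.cast_nonneg
  have h1 : (k : ℝ) + s ≠ 0 := by linarith
  have h2 : (k : ℝ) + 1 + s ≠ 0 := by linarith
  have h3 : (k : ℝ) + (s + 1) = k + 1 + s := by ring
  push_cast
  rw [c_succ, h3]
  field_simp
  ring

/-- The functional equation of `T 1`, differentiated once. -/
lemma rec_two {s : ℝ} (hs : 1 / 2 ≤ s) :
    T 1 s - s * T 2 s = T 1 (s + 1) - (s + 1 / 2) * T 2 (s + 1) := by
  have hs' : 1 / 2 ≤ s + 1 := by linarith
  have hf := ((hasSum_T le_rfl hs).sub ((hasSum_T (j := 2) (by norm_num) hs).mul_left s)).sub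
    ((hasSum_T le_rfl hs').sub ((hasSum_T (j := 2) (by norm_num) hs').mul_left (s + 1 / 2)))
  have hu := (tendsto_u (j := 2) (by norm_num) hs).neg
  rw [neg_zero] at hu
  refine sub_eq_zero.1 (telescope hf (by simp) hu fun k => ?_)
  have hk : (0 : ℝ) ≤ k := k.cast_nonneg
  have h1 : (k : ℝ) + s ≠ 0 := by linarith
  have h2 : (k : ℝ) + 1 + s ≠ 0 := by linarith
  have h3 : (k : ℝ) + (s + 1) = k + 1 + s := by ring
  push_cast
  rw [c_succ, h3]
  field_simp
  ring

/-- The functional equation of `T 1`, differentiated twice (and halved). -/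
lemma rec_three {s : ℝ} (hs : 1 / 2 ≤ s) :
    s * T 3 s - T 2 s = (s + 1 / 2) * T 3 (s + 1) - T 2 (s + 1) := by
  have hs' : 1 / 2 ≤ s + 1 := by linarith
  have hf := (((hasSum_T (j := 3) (by norm_num) hs).mul_left s).sub
    (hasSum_T (j := 2) (by norm_num) hs)).sub
    (((hasSum_T (j := 3) (by norm_num) hs').mul_left (s + 1 / 2)).sub
    (hasSum_T (j := 2) (by norm_num) hs'))
  refine sub_eq_zero.1 (telescope hf (by simp) (tendsto_u (j := 3) (by norm_num) hs) fun k => ?_)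
  have hk : (0 : ℝ) ≤ k := k.cast_nonneg
  have h1 : (k : ℝ) + s ≠ 0 := by linarith
  have h2 : (k : ℝ) + 1 + s ≠ 0 := by linarith
  have h3 : (k : ℝ) + (s + 1) = k + 1 + s := by ring
  push_cast
  rw [c_succ, h3]
  field_simp
  ring

/-! ### The value `T 1 (1/2) = π` -/

lemma T_one_half_add (N : ℕ) : T 1 (1 / 2 + N) = T 1 (1 / 2) * c N := by
  induction N with
  | zero => simp [c_zero]
  | succ n ih =>
    have hn : (0 : ℝ) ≤ n := n.cast_nonneg
    have h := rec_one (s := 1 / 2 + n) (by linarith)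
    rw [ih] at h
    push_cast
    rw [c_succ', ← add_assoc]
    field_simp at h ⊢
    linarith

lemma T_one_one_add (N : ℕ) : T 1 (1 + N) * ((2 * N + 1) * c N) = 2 := by
  induction N with
  | zero =>
    have : T 1 1 = 2 := by simpa [T] using hasSum_one.tsum_eq
    simp [c_zero, this]
  | succ n ih =>
    have hn : (0 : ℝ) ≤ n := n.cast_nonneg
    have h := rec_one (s := 1 + n) (by linarith)
    push_cast
    rw [c_succ', ← add_assoc]
    refine Eq.trans ?_ ih
    field_simp
    linear_combination (-2 * c n) * h

lemma T_one_half : T 1 (1 / 2) = Real.pi := by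
  have hW := Real.Wallis.tendsto_W_nhds_pi_div_two.const_mul 2
  have e : 2 * (Real.pi / 2) = Real.pi := by ring
  rw [e] at hW
  apply le_antisymm
  · -- `T₁(N + 3/2) ≤ T₁(N + 1)`
    have hr : Tendsto (fun N : ℕ => 1 + 1 / (2 * (N : ℝ) + 1)) atTop (𝓝 (1 + 0)) := by
      have h1 : Tendsto (fun N : ℕ => (2 * (N : ℝ) + 1)) atTop atTop :=
        tendsto_atTop_add_const_right _ _
          (Tendsto.const_mul_atTop (by norm_num) tendsto_natCast_atTop_atTop)
      exact (tendsto_const_nhds.add h1.inv_tendsto_atTop).congr fun N => by simp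
    have h := hW.mul hr
    rw [add_zero, mul_one] at h
    refine ge_of_tendsto' h fun N => ?_
    have hN : (0 : ℝ) ≤ N := N.cast_nonneg
    have hc := c_pos N
    have h1 : T 1 (1 / 2 + (N + 1 : ℕ)) ≤ T 1 (1 + N) :=
      T_one_anti (by linarith) (by push_cast; linarith)
    rw [T_one_half_add, c_succ'] at h1
    have h2 := T_one_one_add N
    have h3 := wallis_eq N
    have h4 : Real.Wallis.W N = T 1 (1 + N) / (2 * c N) := by
      field_simp
      have hne : (2 * (N : ℝ) + 1) * c N ≠ 0 := by positivity
      apply mul_right_cancel₀ hne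
      linear_combination 2 * h3 - h2
    rw [h4]
    have h5 : T 1 (1 / 2) * (((N : ℝ) + 1 / 2) / (N + 1) * c N)
        = T 1 (1 / 2) / ((1 + 1 / (2 * (N : ℝ) + 1)) / c N) := by
      field_simp
      ring
    rw [h5, div_le_iff₀ (by positivity)] at h1
    refine h1.trans_eq ?_
    field_simp
  · -- `T₁(N + 1) ≤ T₁(N + 1/2)`
    refine le_of_tendsto' hW fun N => ?_
    have hN : (0 : ℝ) ≤ N := N.cast_nonneg
    have hc := c_pos N
    have h1 : T 1 (1 + N) ≤ T 1 (1 / 2 + N) := T_one_anti (by linarith) (by linarith)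
    rw [T_one_half_add] at h1
    have h2 := T_one_one_add N
    have h3 := wallis_eq N
    have h4 : 2 * Real.Wallis.W N * c N = T 1 (1 + N) := by
      have hne : (2 * (N : ℝ) + 1) * c N ≠ 0 := by positivity
      apply mul_right_cancel₀ hne
      linear_combination 2 * h3 - h2
    rw [← h4] at h1
    exact le_of_mul_le_mul_right h1 hc

/-! ### Logarithmic derivatives -/

/-- Minus the logarithmic derivative of `T 1`. -/
noncomputable def a (s : ℝ) : ℝ := T 2 s / T 1 s

/-- The second logarithmic derivative of `T 1`. -/
noncomputable def d (s : ℝ) : ℝ := 2 * (T 3 s / T 1 s) - a s ^ 2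

lemma a_step {s : ℝ} (hs : 1 / 2 ≤ s) : a s - a (s + 1) = 1 / s - 1 / (s + 1 / 2) := by
  have h1 := rec_one hs
  have h2 := rec_two hs
  have p0 : 0 < s := by linarith
  have p1 := T_one_pos hs
  have p2 := T_one_pos (s := s + 1) (by linarith)
  have hx : T 1 s = (s + 1 / 2) * T 1 (s + 1) / s := by field_simp; linarith
  have hy : T 2 s = (T 1 s - T 1 (s + 1) + (s + 1 / 2) * T 2 (s + 1)) / s := by
    field_simp; linarith
  have p3 : s + 1 / 2 ≠ 0 := by linarith
  unfold a
  rw [hy, hx]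
  field_simp
  ring

lemma d_step {s : ℝ} (hs : 1 / 2 ≤ s) :
    d s - d (s + 1) = 1 / s ^ 2 - 1 / (s + 1 / 2) ^ 2 := by
  have h1 := rec_one hs
  have h3 := rec_three hs
  have ha := a_step hs
  have p0 : 0 < s := by linarith
  have p1 := T_one_pos hs
  have p2 := T_one_pos (s := s + 1) (by linarith)
  have p3 : s + 1 / 2 ≠ 0 := by linarith
  have hb : T 3 s / T 1 s - a s * (1 / s)
      = T 3 (s + 1) / T 1 (s + 1) - a (s + 1) * (1 / (s + 1 / 2)) := by
    have e1 : T 3 s / T 1 s - a s * (1 / s) = (s * T 3 s - T 2 s) / (s * T 1 s) := by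
      unfold a; field_simp
    have e2 : T 3 (s + 1) / T 1 (s + 1) - a (s + 1) * (1 / (s + 1 / 2))
        = ((s + 1 / 2) * T 3 (s + 1) - T 2 (s + 1)) / ((s + 1 / 2) * T 1 (s + 1)) := by
      unfold a; field_simp
    rw [e1, e2, h1, h3]
  have ha' : a s = a (s + 1) + 1 / s - 1 / (s + 1 / 2) := by linarith
  rw [← one_div_pow, ← one_div_pow]
  unfold d
  rw [ha'] at hb ⊢
  linear_combination 2 * hb

lemma a_nonneg {s : ℝ} (hs : 1 / 2 ≤ s) : 0 ≤ a s :=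
  div_nonneg (T_nonneg 2 hs) (T_nonneg 1 hs)

lemma a_le {s : ℝ} (hs : 1 / 2 ≤ s) : a s ≤ 1 / s := by
  have p1 := T_one_pos hs
  unfold a
  rw [div_le_iff₀ p1, one_div_mul_eq_div]
  exact T_succ_le le_rfl hs

lemma b_le {s : ℝ} (hs : 1 / 2 ≤ s) : T 3 s / T 1 s ≤ 1 / s * (1 / s) := by
  have p0 : 0 < s := by linarith
  have p1 := T_one_pos hs
  rw [div_le_iff₀ p1]
  calc T 3 s ≤ T 2 s / s := T_succ_le (by norm_num) hs
    _ ≤ (T 1 s / s) / s := by gcongr; exact T_succ_le le_rfl hs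
    _ = 1 / s * (1 / s) * T 1 s := by field_simp

lemma half_le (N : ℕ) : (1 / 2 : ℝ) ≤ 1 / 2 + N := by
  have hN : (0 : ℝ) ≤ N := N.cast_nonneg
  linarith

lemma tendsto_inv_half : Tendsto (fun N : ℕ => 1 / (1 / 2 + (N : ℝ))) atTop (𝓝 0) := by
  have : Tendsto (fun N : ℕ => 1 / 2 + (N : ℝ)) atTop atTop :=
    tendsto_atTop_add_const_left _ _ tendsto_natCast_atTop_atTop
  exact this.inv_tendsto_atTop.congr fun N => by simp

lemma tendsto_a : Tendsto (fun N : ℕ => a (1 / 2 + N)) atTop (𝓝 0) :=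
  squeeze_zero (fun N => a_nonneg (half_le N)) (fun N => a_le (half_le N)) tendsto_inv_half

lemma tendsto_d : Tendsto (fun N : ℕ => d (1 / 2 + N)) atTop (𝓝 0) := by
  have hb : Tendsto (fun N : ℕ => T 3 (1 / 2 + N) / T 1 (1 / 2 + N)) atTop (𝓝 0) := by
    have h := tendsto_inv_half.mul tendsto_inv_half
    rw [mul_zero] at h
    exact squeeze_zero (fun N => div_nonneg (T_nonneg 3 (half_le N)) (T_nonneg 1 (half_le N)))
      (fun N => b_le (half_le N)) h
  simpa [d] using (hb.const_mul 2).sub (tendsto_a.pow 2)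

/-- `a(1/2) - a(1/2 + N)` is twice a partial sum of the alternating harmonic series. -/
lemma a_half_sub (N : ℕ) :
    a (1 / 2) - a (1 / 2 + N) = 2 * ((harmonic (2 * N) : ℝ) - harmonic N) := by
  induction N with
  | zero => simp
  | succ n ih =>
    have h := a_step (half_le n)
    rw [show 2 * (n + 1) = 2 * n + 1 + 1 by ring]
    rw [harmonic_succ, harmonic_succ, harmonic_succ]
    push_cast
    rw [← add_assoc]
    have e : (1 : ℝ) / (1 / 2 + n) - 1 / (1 / 2 + n + 1 / 2)
        = 2 * ((2 * n + 1 : ℝ)⁻¹ + (2 * n + 1 + 1 : ℝ)⁻¹ - (n + 1 : ℝ)⁻¹) := by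
      have h1 : (1 / 2 + n : ℝ) = (2 * n + 1) / 2 := by ring
      have h2 : (1 / 2 + n + 1 / 2 : ℝ) = n + 1 := by ring
      have h3 : (2 * n + 1 + 1 : ℝ) = 2 * (n + 1) := by ring
      rw [h2, h1, h3]
      field_simp
      ring
    linear_combination ih + h + e

lemma a_half : a (1 / 2) = Real.log 4 := by
  have hdbl : Tendsto (fun N : ℕ => 2 * N) atTop atTop :=
    tendsto_id.const_mul_atTop' (by norm_num)
  have h1 := Real.tendsto_harmonic_sub_log
  have h2 := ((h1.comp hdbl).sub h1).const_mul 2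
  have h3 : Tendsto (fun N : ℕ => a (1 / 2) - a (1 / 2 + N)) atTop (𝓝 (a (1 / 2) - 0)) :=
    tendsto_const_nhds.sub tendsto_a
  have h4 := h3.sub h2
  have hlog : Real.log 4 = 2 * Real.log 2 := by
    rw [show (4 : ℝ) = 2 ^ 2 by norm_num, Real.log_pow]; norm_num
  have h5 : Tendsto (fun _ : ℕ => Real.log 4) atTop
      (𝓝 (a (1 / 2) - 0 - 2 * (Real.eulerMascheroniConstant - Real.eulerMascheroniConstant))) := by
    refine h4.congr' ?_
    filter_upwards [eventually_ne_atTop 0] with N hN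
    have hN' : (N : ℝ) ≠ 0 := by exact_mod_cast hN
    simp only [Function.comp]
    rw [a_half_sub]
    push_cast
    rw [Real.log_mul two_ne_zero hN', hlog]
    ring
  have := tendsto_nhds_unique h5 tendsto_const_nhds
  linarith

/-- `d(1/2) - d(1/2 + N)` is four times a partial sum of `∑ (-1)^(m+1) / m²`, written through the
partial sums of `ζ(2)`. -/
lemma d_half_sub (N : ℕ) :
    d (1 / 2) - d (1 / 2 + N) = 4 * ∑ m ∈ range (2 * N), 1 / (m + 1 : ℝ) ^ 2
      - 2 * ∑ m ∈ range N, 1 / (m + 1 : ℝ) ^ 2 := by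
  induction N with
  | zero => simp
  | succ n ih =>
    have h := d_step (half_le n)
    rw [show 2 * (n + 1) = 2 * n + 1 + 1 by ring]
    rw [sum_range_succ, sum_range_succ, sum_range_succ]
    push_cast
    rw [← add_assoc]
    have e : (1 : ℝ) / (1 / 2 + n) ^ 2 - 1 / (1 / 2 + n + 1 / 2) ^ 2
        = 4 * (1 / (2 * n + 1 : ℝ) ^ 2 + 1 / (2 * n + 1 + 1 : ℝ) ^ 2)
          - 2 * (1 / (n + 1 : ℝ) ^ 2) := by
      have h1 : (1 / 2 + n : ℝ) = (2 * n + 1) / 2 := by ring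
      have h2 : (1 / 2 + n + 1 / 2 : ℝ) = n + 1 := by ring
      have h3 : (2 * n + 1 + 1 : ℝ) = 2 * (n + 1) := by ring
      rw [h2, h1, h3]
      field_simp
      ring
    linear_combination ih + h + e

lemma d_half : d (1 / 2) = 2 * zetaVal 2 := by
  have hdbl : Tendsto (fun N : ℕ => 2 * N) atTop atTop :=
    tendsto_id.const_mul_atTop' (by norm_num)
  have hs : Summable (fun m : ℕ => 1 / (m + 1 : ℝ) ^ 2) := by
    have h := (summable_nat_add_iff 1).2 (Real.summable_one_div_nat_pow.2 one_lt_two)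
    simpa using h
  have h1 : Tendsto (fun N : ℕ => ∑ m ∈ range N, 1 / (m + 1 : ℝ) ^ 2) atTop (𝓝 (zetaVal 2)) :=
    hs.hasSum.tendsto_sum_nat
  have h2 := ((h1.comp hdbl).const_mul 4).sub (h1.const_mul 2)
  have h3 : Tendsto (fun N : ℕ => d (1 / 2) - d (1 / 2 + N)) atTop (𝓝 (d (1 / 2) - 0)) :=
    tendsto_const_nhds.sub tendsto_d
  have h4 := tendsto_nhds_unique (h3.congr d_half_sub) h2
  linarith

lemma T_three_half :
    T 3 (1 / 2) = Real.pi * (zetaVal 2 + (1 / 2) * (Real.log 4) ^ 2) := by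
  have h := d_half
  unfold d at h
  rw [a_half, T_one_half] at h
  have hpi := Real.pi_pos
  have h' : T 3 (1 / 2) / Real.pi = zetaVal 2 + (1 / 2) * (Real.log 4) ^ 2 := by linarith
  rw [← h']
  field_simp

end GammaTilde

/-- The series `∑_{k=0}^∞ c(k)/(k + 1/2)³` converges and equals
`π·(ζ(2) + (1/2)(log 4)²)`; i.e. `γ̃₂ = (1/π)·∑_{k=0}^∞ c(k)/(k + 1/2)³`
equals `ζ(2) + (1/2)(log 4)²`. -/
theorem gamma_tilde_two :
    HasSum (fun k : ℕ => c k / ((k : ℝ) + 1 / 2) ^ 3)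
      (Real.pi * (zetaVal 2 + (1 / 2) * (Real.log 4) ^ 2)) ∧
    (1 / Real.pi) * ∑' k : ℕ, c k / ((k : ℝ) + 1 / 2) ^ 3
      = zetaVal 2 + (1 / 2) * (Real.log 4) ^ 2 := by
  have h := GammaTilde.hasSum_T (j := 3) (s := 1 / 2) (by norm_num) le_rfl
  rw [GammaTilde.T_three_half] at h
  refine ⟨h, ?_⟩
  rw [h.tsum_eq]
  have hpi := Real.pi_pos
  field_simp
end

section
/- The dilogarithm at 1/2 satisfies 2·Li₂(1/2) = π²/6 − (1/4)(log 4)²; equivalently, ∑_{n=1}^∞ 2^{-n}/n² = π²/12 − (1/2)(log 2)². -/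
/-!
The value comes from Euler's reflection formula
`Li₂(x) + Li₂(1 - x) + log x · log (1 - x) = π² / 6` on `(0, 1)`, taken at `x = 1/2`.
Termwise differentiation gives `Li₂'(x) = -log (1 - x) / x`, so the left-hand side has zero
derivative on `(0, 1)` and is constant there. The constant is its limit as `x → 0⁺`: `Li₂` is
continuous on `[-1, 1]` by the Weierstrass test, `Li₂(0) = 0`, `Li₂(1) = ζ(2) = π² / 6`, and
`log x · log (1 - x) → 0` because `x log x → 0` while `log (1 - x) / x → -1`.
-/

/-- The dilogarithm `Li₂(x) = ∑_{n=1}^∞ xⁿ/n²` (for `|x| ≤ 1`). -/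
noncomputable def Li2 (x : ℝ) : ℝ := ∑' n : ℕ, x ^ (n + 1) / (n + 1 : ℝ) ^ 2

open Filter Topology Set

lemma summable_one_div_succ_sq : Summable fun n : ℕ => 1 / (n + 1 : ℝ) ^ 2 := by
  have h := (summable_nat_add_iff 1).2 hasSum_zeta_two.summable
  simpa using h

lemma Li2_zero : Li2 0 = 0 := by
  simp [Li2]

lemma Li2_one : Li2 1 = Real.pi ^ 2 / 6 := by
  have h := hasSum_zeta_two.tsum_eq
  rw [hasSum_zeta_two.summable.tsum_eq_zero_add] at h
  simpa [Li2] using h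

lemma continuousOn_Li2 : ContinuousOn Li2 (Icc (-1) 1) := by
  unfold Li2
  refine continuousOn_tsum (fun n => by fun_prop) summable_one_div_succ_sq ?_
  intro n x hx
  rw [norm_div, norm_pow, Real.norm_eq_abs, Real.norm_of_nonneg (by positivity)]
  gcongr
  exact pow_le_one₀ (abs_nonneg x) (abs_le.2 hx)

lemma hasDerivAt_Li2 {x : ℝ} (hx0 : 0 < x) (hx1 : x < 1) :
    HasDerivAt Li2 (-Real.log (1 - x) / x) x := by
  obtain ⟨r, hxr, hr1⟩ := exists_between hx1
  have hr0 : 0 < r := hx0.trans hxr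
  have key : HasDerivAt (fun z : ℝ => ∑' n : ℕ, z ^ (n + 1) / (n + 1 : ℝ) ^ 2)
      (∑' n : ℕ, x ^ n / (n + 1 : ℝ)) x := by
    refine hasDerivAt_tsum_of_isPreconnected (u := fun n => r ^ n) (t := Ioo (-r) r) (y₀ := 0)
      (g := fun (n : ℕ) (z : ℝ) => z ^ (n + 1) / (n + 1 : ℝ) ^ 2)
      (g' := fun (n : ℕ) (z : ℝ) => z ^ n / (n + 1 : ℝ))
      (summable_geometric_of_lt_one hr0.le hr1) isOpen_Ioo isPreconnected_Ioo ?_ ?_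
      ⟨by linarith, hr0⟩ ?_ ⟨by linarith, hxr⟩
    · intro n y _
      have hn : (n + 1 : ℝ) ≠ 0 := by positivity
      refine ((hasDerivAt_pow (n + 1) y).div_const ((n + 1 : ℝ) ^ 2)).congr_deriv ?_
      push_cast
      field_simp
    · intro n y hy
      rw [norm_div, norm_pow, Real.norm_eq_abs, Real.norm_of_nonneg (by positivity)]
      refine (div_le_self (by positivity) (by linarith [n.cast_nonneg (α := ℝ)])).trans ?_
      gcongr
      exact (abs_lt.2 hy).le
    · simp [summable_zero]
  have hs := (Real.hasSum_pow_div_log_of_abs_lt_one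
    (abs_lt.2 ⟨by linarith, hx1⟩ : |x| < 1)).div_const x
  have heq : ∑' n : ℕ, x ^ n / (n + 1 : ℝ) = -Real.log (1 - x) / x := by
    rw [← hs.tsum_eq]
    congr 1
    ext n
    field_simp
    ring
  rw [← heq]
  exact key

lemma tendsto_log_mul_log_one_sub :
    Tendsto (fun x : ℝ => Real.log x * Real.log (1 - x)) (𝓝[>] 0) (𝓝 0) := by
  have h1 : Tendsto (fun x : ℝ => x * Real.log x) (𝓝[>] 0) (𝓝 0) := by
    have := Real.continuous_mul_log.tendsto 0
    simp only [zero_mul] at this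
    exact this.mono_left nhdsWithin_le_nhds
  have hd : HasDerivAt (fun x : ℝ => Real.log (1 - x)) (-1) 0 := by
    simpa using ((hasDerivAt_id (0 : ℝ)).const_sub 1).log (by simp)
  have h2 : Tendsto (fun x : ℝ => x⁻¹ * Real.log (1 - x)) (𝓝[>] 0) (𝓝 (-1)) := by
    simpa using hd.tendsto_slope_zero_right
  have h := h1.mul h2
  rw [zero_mul] at h
  refine h.congr' ?_
  filter_upwards [self_mem_nhdsWithin] with x hx
  have : x ≠ 0 := ne_of_gt hx
  field_simp

/-- Euler's reflection formula for the dilogarithm. -/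
lemma Li2_add_Li2_one_sub {x : ℝ} (hx : x ∈ Ioo (0 : ℝ) 1) :
    Li2 x + Li2 (1 - x) + Real.log x * Real.log (1 - x) = Real.pi ^ 2 / 6 := by
  set F : ℝ → ℝ := fun y => Li2 y + Li2 (1 - y) + Real.log y * Real.log (1 - y) with hF
  have hderiv : ∀ y ∈ Ioo (0 : ℝ) 1, HasDerivAt F 0 y := by
    rintro y ⟨hy0, hy1⟩
    have hy1' : 0 < 1 - y := by linarith
    have hsub : HasDerivAt (fun z : ℝ => 1 - z) (-1) y := (hasDerivAt_id y).const_sub 1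
    have h1 := hasDerivAt_Li2 hy0 hy1
    have h2 := (hasDerivAt_Li2 hy1' (by linarith)).comp y hsub
    have h3 := (Real.hasDerivAt_log hy0.ne').mul (hsub.log hy1'.ne')
    refine ((h1.add h2).add h3).congr_deriv ?_
    rw [sub_sub_cancel]
    field_simp
    ring
  have hconst : ∀ y ∈ Ioo (0 : ℝ) 1, F y = F x := fun y hy =>
    isOpen_Ioo.is_const_of_deriv_eq_zero isPreconnected_Ioo
      (fun z hz => (hderiv z hz).differentiableAt.differentiableWithinAt)
      (fun z hz => (hderiv z hz).deriv) hy hx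
  have hev : ∀ᶠ y in 𝓝[>] (0 : ℝ), y ∈ Ioo (0 : ℝ) 1 := Ioo_mem_nhdsGT one_pos
  have hl0 : Tendsto Li2 (𝓝[>] 0) (𝓝 0) := by
    have h := (continuousOn_Li2.continuousAt (Icc_mem_nhds (by norm_num) (by norm_num) :
      Icc (-1 : ℝ) 1 ∈ 𝓝 0)).tendsto
    rw [Li2_zero] at h
    exact h.mono_left nhdsWithin_le_nhds
  have hl1 : Tendsto (fun y => Li2 (1 - y)) (𝓝[>] 0) (𝓝 (Real.pi ^ 2 / 6)) := by
    have h : Tendsto Li2 (𝓝[Icc (-1) 1] 1) (𝓝 (Li2 1)) := continuousOn_Li2 1 (by simp)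
    rw [Li2_one] at h
    refine h.comp (tendsto_nhdsWithin_iff.2 ⟨?_, ?_⟩)
    · have hc : Continuous fun y : ℝ => 1 - y := by fun_prop
      have := hc.tendsto 0
      rw [sub_zero] at this
      exact this.mono_left nhdsWithin_le_nhds
    · filter_upwards [hev] with y hy
      exact ⟨by linarith [hy.2], by linarith [hy.1]⟩
  have hlim : Tendsto F (𝓝[>] 0) (𝓝 (Real.pi ^ 2 / 6)) := by
    simpa using (hl0.add hl1).add tendsto_log_mul_log_one_sub
  have hlim' : Tendsto F (𝓝[>] 0) (𝓝 (F x)) :=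
    tendsto_const_nhds.congr' (hev.mono fun y hy => (hconst y hy).symm)
  exact tendsto_nhds_unique hlim' hlim

/-- `2·Li₂(1/2) = π²/6 - (1/4)(log 4)²`; equivalently
`∑_{n=1}^∞ 2^{-n}/n² = π²/12 - (1/2)(log 2)²`. -/
theorem dilog_half :
    2 * Li2 (1 / 2) = Real.pi ^ 2 / 6 - (1 / 4) * (Real.log 4) ^ 2 ∧
    ∑' n : ℕ, (1 / 2 : ℝ) ^ (n + 1) / (n + 1 : ℝ) ^ 2
      = Real.pi ^ 2 / 12 - (1 / 2) * (Real.log 2) ^ 2 := by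
  have h := Li2_add_Li2_one_sub (x := 1 / 2) ⟨by norm_num, by norm_num⟩
  have hhalf : (1 : ℝ) - 1 / 2 = 1 / 2 := by norm_num
  have hlog : Real.log (1 / 2) = -Real.log 2 := by rw [one_div, Real.log_inv]
  have hlog4 : Real.log 4 = 2 * Real.log 2 := by
    rw [show (4 : ℝ) = 2 ^ 2 by norm_num, Real.log_pow]
    norm_num
  rw [hhalf, hlog] at h
  constructor
  · rw [hlog4]
    linarith
  · change Li2 (1 / 2) = _
    linarith
end
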